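/- Let K ⊆ ℝ² be a convex body, C ⊆ ℝ² a 0-symmetric convex body, and suppose K is pseudo-complete with respect to C. Then D(K,C)/w(K,C) ≤ ((s(K)+1)/2)·c(s(K)). -/

import Mathlib

open scoped Pointwise RealInnerProductSpace
open Set

noncomputable section

abbrev E2 := EuclideanSpace ℝ (Fin 2)

/-- A convex body: compact convex set with nonempty interior. -/
def IsConvexBody (K : Set E2) : Prop :=
  Convex ℝ K ∧ IsCompact K ∧ (interior K).Nonempty

/-- circumradius `R(K,C)` -/
def circum (K C : Set E2) : ℝ :=
  sInf {ρ : ℝ | 0 < ρ ∧ ∃ t : E2, K ⊆ ρ • C + {t}}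

/-- inradius `r(K,C)` -/
def inrad (K C : Set E2) : ℝ :=
  sSup {ρ : ℝ | 0 < ρ ∧ ∃ t : E2, ρ • C + {t} ⊆ K}

/-- width `w(K,C)` -/
def widthB (K C : Set E2) : ℝ := 2 * inrad (K - K) (C - C)

/-- diameter `D(K,C)` -/
def diamB (K C : Set E2) : ℝ := 2 * circum (K - K) (C - C)

/-- Minkowski asymmetry `s(K)` -/
def minkAsym (K : Set E2) : ℝ :=
  sInf {ρ : ℝ | 0 < ρ ∧ ∃ c : E2, K - {c} ⊆ ρ • ({c} - K)}

/-- `K` is Minkowski centered -/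
def MinkCentered (K : Set E2) : Prop := K ⊆ minkAsym K • (-K)

/-- `τ(K)`: smallest `ρ > 0` with `K ∩ (-K) ⊆ ρ • ((K-K)/2)` -/
def tauB (K : Set E2) : ℝ :=
  sInf {ρ : ℝ | 0 < ρ ∧ K ∩ (-K) ⊆ ρ • ((2:ℝ)⁻¹ • (K - K))}

/-- golden ratio -/
def phiR : ℝ := (1 + Real.sqrt 5) / 2

def cExpr2 (s : ℝ) : ℝ :=
  (s^2+1)^2 / ((s^2-1) * (s^2+2*s-1+2*Real.sqrt (s*(s^2-1))))

def cExpr3 (s : ℝ) : ℝ := 2*(s^2-2*s-1) / ((s-3)*(s+1))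

/-- `ŝ`: the unique `s ∈ (φ,2)` where the two expressions agree. -/
def sHat : ℝ := sInf {s : ℝ | phiR < s ∧ s < 2 ∧ cExpr2 s = cExpr3 s}

def cFun (s : ℝ) : ℝ :=
  if s ≤ phiR then 1 else if s ≤ sHat then cExpr2 s else cExpr3 s

/-- polar body -/
def polarBody (K : Set E2) : Set E2 := {y | ∀ x ∈ K, (inner ℝ x y : ℝ) ≤ 1}

/-- `γ(K)` -/
def gammaB (K : Set E2) : ℝ :=
  sInf {ρ : ℝ | 0 < ρ ∧
    polarBody ((2:ℝ)⁻¹ • (polarBody K - polarBody K)) ⊆ ρ • convexHull ℝ (K ∪ -K)}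

/-- positive hull of two points -/
def posHull2 (a b : E2) : Set E2 := {x | ∃ α β : ℝ, 0 ≤ α ∧ 0 ≤ β ∧ x = α • a + β • b}

/-- asymmetry point of `K`: a point of `bd(K) ∩ bd(−(1/s(K))·K)` -/
def IsAsymPoint (K : Set E2) (p : E2) : Prop :=
  p ∈ frontier K ∧ p ∈ frontier ((-(minkAsym K)⁻¹) • K)

/-- a well-spread triple of asymmetry points -/
def WellSpread (K : Set E2) (p1 p2 p3 : E2) : Prop :=
  IsAsymPoint K p1 ∧ IsAsymPoint K p2 ∧ IsAsymPoint K p3 ∧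
  ∃ a1 a2 a3 : E2, a1 ≠ 0 ∧ a2 ≠ 0 ∧ a3 ≠ 0 ∧
    (∀ x ∈ K, (inner ℝ a1 x : ℝ) ≤ inner ℝ a1 p1) ∧
    (∀ x ∈ K, (inner ℝ a2 x : ℝ) ≤ inner ℝ a2 p2) ∧
    (∀ x ∈ K, (inner ℝ a3 x : ℝ) ≤ inner ℝ a3 p3) ∧
    (0:E2) ∈ interior (convexHull ℝ {p1, p2, p3}) ∧
    (0:E2) ∈ convexHull ℝ {a1, a2, a3}

/-- two points of `bd(K) ∩ bd(-K)` are consecutive -/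
def Consecutive (K : Set E2) (z1 z2 : E2) : Prop :=
  ¬ ∃ z, z ∈ frontier K ∩ frontier (-K) ∧ z ∈ interior (posHull2 z1 z2)

/-- point of the plane from coordinates -/
def pt (x y : ℝ) : E2 := (WithLp.equiv 2 (Fin 2 → ℝ)).symm ![x, y]

/-- the golden house -/
def goldenHouse : Set E2 :=
  convexHull ℝ {pt 1 0, pt (-1) 0, pt 1 (-1), pt (-1) (-1), pt 0 phiR}

/-!
Write `r`, `R` for the inradius and circumradius. If `r • C + t ⊆ K`, pseudo-completeness gives
`K - K ⊆ (r + R) • C` and hence `K ⊆ R • C + t`: the incenter is also a circumcenter. Optimality of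
`R` puts `0` in the convex hull of three normals at contact points of `K` with `R • C + t`. The
corresponding supporting lines of `r • C + t`, on the far side of `t`, support `K` too, so
`s(K) = R / r`, and `D(K, C) = (s(K) + 1) r`.

For `x ∈ r • C` both `t + x` and `t - x` lie in `K`, so the bound on the width follows from
`(K - t) ∩ (t - K) ⊆ (c(s) / 2) • (K - K)`. This is checked on each linear functional: the three
supporting lines bound a triangle containing `K`, a functional is determined by its values at the
vertices, and the inclusion becomes an inequality between three such values. For `s > φ` it reduces
to `2 ≤ c(s) (s + 1)` and the nonnegativity on `[s - 1, 1]` of a quadratic in `s + 1` times a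
barycentric coordinate of `t`.
-/

open scoped Topology
open Bornology Filter Metric

section Separation

variable {E : Type*} [NormedAddCommGroup E] [InnerProductSpace ℝ E]

theorem exists_inner_lt_lt_inner_of_notMem [CompleteSpace E] {S : Set E} {x : E}
    (hconv : Convex ℝ S) (hclosed : IsClosed S) (hx : x ∉ S) :
    ∃ (a : E) (u : ℝ), (∀ y ∈ S, ⟪a, y⟫ < u) ∧ u < ⟪a, x⟫ := by
  obtain ⟨f, u, hfS, hfx⟩ := geometric_hahn_banach_closed_point hconv hclosed hx
  refine ⟨(InnerProductSpace.toDual ℝ E).symm f, u, fun y hy => ?_, ?_⟩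
  · simpa only [InnerProductSpace.toDual_symm_apply] using hfS y hy
  · simpa only [InnerProductSpace.toDual_symm_apply] using hfx

theorem mem_of_forall_exists_inner_le [CompleteSpace E] {S : Set E} {x : E}
    (hconv : Convex ℝ S) (hclosed : IsClosed S) (h : ∀ a : E, ∃ y ∈ S, ⟪a, x⟫ ≤ ⟪a, y⟫) :
    x ∈ S := by
  by_contra hx
  obtain ⟨a, u, hau, hux⟩ := exists_inner_lt_lt_inner_of_notMem hconv hclosed hx
  obtain ⟨y, hy, hxy⟩ := h a
  exact ((hau y hy).trans hux).not_ge hxy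

end Separation

section Caratheodory

variable {E : Type*} [AddCommGroup E] [Module ℝ E]

theorem convexHull_range_eq_image_stdSimplex {ι : Type*} [Fintype ι] (g : ι → E) :
    convexHull ℝ (range g) = (fun w : ι → ℝ => ∑ i, w i • g i) '' stdSimplex ℝ ι := by
  classical
  rw [← convexHull_rangle_single_eq_stdSimplex]
  change _ = Fintype.linearCombination ℝ g '' _
  rw [LinearMap.image_convexHull, ← range_comp]
  congr with i
  simp [Fintype.linearCombination_apply_single]

theorem exists_range_subset_of_mem_convexHull [FiniteDimensional ℝ E] {S : Set E} {x : E}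
    (hx : x ∈ convexHull ℝ S) :
    ∃ g : Fin (Module.finrank ℝ E + 1) → E, range g ⊆ S ∧ x ∈ convexHull ℝ (range g) := by
  obtain ⟨ι, _, z, w, hzS, hz, hw, hw1, rfl⟩ := eq_pos_convex_span_of_mem_convexHull hx
  have hcard : Fintype.card ι ≤ Module.finrank ℝ E + 1 :=
    hz.card_le_finrank_succ.trans (Nat.succ_le_succ (Submodule.finrank_le _))
  have : Nonempty ι := by
    by_contra hempty
    simp [not_nonempty_iff.1 hempty] at hw1
  obtain ⟨f⟩ : Nonempty (ι ↪ Fin (Module.finrank ℝ E + 1)) :=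
    Function.Embedding.nonempty_of_card_le (by simpa using hcard)
  have hrange : range (z ∘ Function.invFun f) = range z :=
    (Function.invFun_surjective f.injective).range_comp z
  refine ⟨z ∘ Function.invFun f, hrange ▸ hzS, hrange ▸ ?_⟩
  rw [convexHull_range_eq_image_stdSimplex]
  exact ⟨w, ⟨fun i => (hw i).le, hw1⟩, rfl⟩

theorem exists_stdSimplex_of_mem_convexHull [FiniteDimensional ℝ E] {S : Set E} {x : E}
    (hx : x ∈ convexHull ℝ S) :
    ∃ g : Fin (Module.finrank ℝ E + 1) → E, ∃ w ∈ stdSimplex ℝ (Fin (Module.finrank ℝ E + 1)),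
      (∀ i, g i ∈ S) ∧ ∑ i, w i • g i = x := by
  obtain ⟨g, hgS, hxg⟩ := exists_range_subset_of_mem_convexHull hx
  rw [convexHull_range_eq_image_stdSimplex] at hxg
  obtain ⟨w, hw, hwx⟩ := hxg
  exact ⟨g, w, hw, range_subset_iff.1 hgS, hwx⟩

theorem isCompact_convexHull_of_isCompact [FiniteDimensional ℝ E] [TopologicalSpace E]
    [ContinuousAdd E] [ContinuousSMul ℝ E] {S : Set E} (hS : IsCompact S) :
    IsCompact (convexHull ℝ S) := by
  set ι := Fin (Module.finrank ℝ E + 1)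
  have hcomb : Continuous fun q : (ι → E) × (ι → ℝ) => ∑ i, q.2 i • q.1 i := by fun_prop
  have himage : convexHull ℝ S = (fun q : (ι → E) × (ι → ℝ) => ∑ i, q.2 i • q.1 i) ''
      ((univ.pi fun _ => S) ×ˢ stdSimplex ℝ ι) := by
    refine Subset.antisymm (fun x hx => ?_) ?_
    · obtain ⟨g, w, hw, hg, hgx⟩ := exists_stdSimplex_of_mem_convexHull hx
      exact ⟨(g, w), ⟨fun i _ => hg i, hw⟩, hgx⟩
    · rintro _ ⟨⟨g, w⟩, ⟨hg, hw⟩, rfl⟩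
      exact (convex_convexHull ℝ S).sum_mem (fun i _ => hw.1 i) hw.2
        fun i _ => subset_convexHull ℝ S (hg i trivial)
  rw [himage]
  exact ((isCompact_univ_pi fun _ => hS).prod (isCompact_stdSimplex ℝ ι)).image hcomb

end Caratheodory

section Perturbation

theorem eventually_forall_sub_mul_lt {X : Type*} [TopologicalSpace X] {S : Set X} {f g : X → ℝ}
    {R : ℝ} (hS : IsCompact S) (hf : Continuous f) (hg : Continuous g) (hfR : ∀ x ∈ S, f x ≤ R)
    (hgpos : ∀ x ∈ S, f x = R → 0 < g x) :
    ∀ᶠ e in 𝓝[>] (0 : ℝ), ∀ x ∈ S, f x - e * g x < R := by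
  have hlocal : ∀ y ∈ S, ∀ᶠ z : ℝ × X in 𝓝 (0, y),
      0 < z.1 → z.2 ∈ S → f z.2 - z.1 * g z.2 < R := by
    intro y hy
    rcases (hfR y hy).lt_or_eq with hlt | heq
    · have hcont : Continuous fun z : ℝ × X => f z.2 - z.1 * g z.2 := by fun_prop
      filter_upwards [hcont.continuousAt.eventually_lt_const (by simpa using hlt)] with z hz _ _
      exact hz
    · have hcont : Continuous fun z : ℝ × X => g z.2 := by fun_prop
      filter_upwards [hcont.continuousAt.eventually_const_lt (hgpos y hy heq)] with z hgz hz hzS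
      linarith [hfR z.2 hzS, mul_pos hz hgz]
  have hunif := hS.eventually_forall_of_forall_eventually
    (P := fun e x => 0 < e → x ∈ S → f x - e * g x < R) hlocal
  filter_upwards [self_mem_nhdsWithin, nhdsWithin_le_nhds hunif] with e he h x hx
  exact h x hx he hx

theorem exists_pos_forall_sub_mul_le {X : Type*} [TopologicalSpace X] {S : Set X} {f g : X → ℝ}
    {R : ℝ} (hS : IsCompact S) (hf : Continuous f) (hg : Continuous g) (hfR : ∀ x ∈ S, f x ≤ R)
    (hgpos : ∀ x ∈ S, f x = R → 0 < g x) (hR : 0 < R) :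
    ∃ e ρ : ℝ, 0 < ρ ∧ ρ < R ∧ ∀ x ∈ S, f x - e * g x ≤ ρ := by
  obtain ⟨e, he⟩ := (eventually_forall_sub_mul_lt hS hf hg hfR hgpos).exists
  have hbdd : ∃ M < R, ∀ x ∈ S, f x - e * g x ≤ M := by
    rcases S.eq_empty_or_nonempty with rfl | hne
    · exact ⟨R - 1, by linarith, by simp⟩
    · obtain ⟨x₀, hx₀, hmax⟩ := hS.exists_isMaxOn hne
        (f := fun x => f x - e * g x) (by fun_prop)
      exact ⟨_, he x₀ hx₀, fun x hx => hmax hx⟩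
  obtain ⟨M, hMR, hM⟩ := hbdd
  exact ⟨e, max M (R / 2), by positivity, max_lt hMR (by linarith),
    fun x hx => (hM x hx).trans (le_max_left _ _)⟩

end Perturbation

section Homothets

theorem sub_mem_nhds_zero {G : Type*} [AddGroup G] [TopologicalSpace G] {C : Set G}
    (hC : C ∈ 𝓝 0) : C - C ∈ 𝓝 0 :=
  mem_of_superset hC fun c hc => ⟨c, hc, 0, mem_of_mem_nhds hC, sub_zero c⟩

theorem neg_mem_of_eq_neg {G : Type*} [InvolutiveNeg G] {C : Set G} (hsymm : C = -C) {c : G}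
    (hc : c ∈ C) : -c ∈ C := by
  rwa [hsymm, Set.neg_mem_neg]

theorem diam_pos_of_mem_nhds {X : Type*} [MetricSpace X] {C : Set X} {x : X} [(𝓝[≠] x).NeBot]
    (hCbdd : IsBounded C) (hC : C ∈ 𝓝 x) : 0 < diam C :=
  diam_pos (infinite_of_mem_nhds x hC).nontrivial hCbdd

variable {E : Type*} [NormedAddCommGroup E] [NormedSpace ℝ E] {K C : Set E} {ρ : ℝ} {t : E}

theorem smul_add_singleton_subset_iff : ρ • C + {t} ⊆ K ↔ ∀ c ∈ C, ρ • c + t ∈ K := by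
  rw [add_singleton, image_subset_iff, smul_set_subset_iff]
  rfl

theorem subset_smul_add_singleton_iff : K ⊆ ρ • C + {t} ↔ ∀ k ∈ K, k - t ∈ ρ • C := by
  simp only [add_singleton, image_add_right, ← sub_eq_add_neg]
  rfl

theorem diam_smul_add_singleton (hρ : 0 ≤ ρ) : diam (ρ • C + {t}) = ρ * diam C := by
  rw [add_singleton, (isometry_add_right t).diam_image, diam_smul₀, Real.norm_of_nonneg hρ]

theorem le_div_diam_of_smul_add_singleton_subset (hK : IsBounded K) (hC : 0 < diam C)
    (hρ : 0 ≤ ρ) (h : ρ • C + {t} ⊆ K) : ρ ≤ diam K / diam C := by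
  rw [le_div_iff₀ hC, ← diam_smul_add_singleton hρ]
  exact diam_mono h hK

theorem exists_pos_subset_smul (hK : IsBounded K) (hC : C ∈ 𝓝 0) : ∃ ρ : ℝ, 0 < ρ ∧ K ⊆ ρ • C := by
  obtain ⟨ρ, hρ, hsub⟩ := (NormedSpace.isVonNBounded_of_isBounded ℝ hK hC).exists_pos
  exact ⟨ρ, hρ, hsub ρ (le_abs_self ρ)⟩

theorem exists_pos_smul_add_singleton_subset (hK : (interior K).Nonempty) (hC : IsBounded C) :
    ∃ ρ : ℝ, 0 < ρ ∧ ∃ t, ρ • C + {t} ⊆ K := by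
  obtain ⟨x, hx⟩ := hK
  have hnhds : {y | y + x ∈ K} ∈ 𝓝 0 := by
    refine (continuous_add_const x).continuousAt.preimage_mem_nhds ?_
    rw [zero_add]
    exact mem_interior_iff_mem_nhds.1 hx
  obtain ⟨ρ, hρ, hsub⟩ := exists_pos_subset_smul hC hnhds
  refine ⟨ρ⁻¹, inv_pos.2 hρ, x, smul_add_singleton_subset_iff.2 fun c hc => ?_⟩
  exact (mem_smul_set_iff_inv_smul_mem₀ hρ.ne' _ _).1 (hsub hc)

theorem mem_nhds_zero_of_eq_neg (hconv : Convex ℝ C) (hsymm : C = -C)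
    (hint : (interior C).Nonempty) : C ∈ 𝓝 0 := by
  obtain ⟨x, hx⟩ := hint
  have hneg : -x ∈ interior C := by
    rw [hsymm] at hx
    exact ((Homeomorph.neg E).preimage_interior C).symm.subset hx
  rw [← mem_interior_iff_mem_nhds, ← midpoint_self_neg ℝ x]
  exact hconv.interior.midpoint_mem hx hneg

end Homothets

section Radii

variable {K C : Set E2}

theorem bddAbove_inrad (hK : IsBounded K) (hCbdd : IsBounded C) (hC : C ∈ 𝓝 0) :
    BddAbove {ρ : ℝ | 0 < ρ ∧ ∃ t : E2, ρ • C + {t} ⊆ K} :=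
  ⟨diam K / diam C, fun _ ⟨hρ, _, ht⟩ =>
    le_div_diam_of_smul_add_singleton_subset hK (diam_pos_of_mem_nhds hCbdd hC) hρ.le ht⟩

theorem isGreatest_inrad (hK : IsCompact K) (hKint : (interior K).Nonempty)
    (hCbdd : IsBounded C) (hC : C ∈ 𝓝 0) :
    IsGreatest {ρ : ℝ | 0 < ρ ∧ ∃ t : E2, ρ • C + {t} ⊆ K} (inrad K C) := by
  set S := {ρ : ℝ | 0 < ρ ∧ ∃ t : E2, ρ • C + {t} ⊆ K}
  obtain ⟨b, hb⟩ : BddAbove S := bddAbove_inrad hK.isBounded hCbdd hC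
  set T := Icc 0 b ×ˢ K ∩ ⋂ c ∈ C, {q : ℝ × E2 | q.1 • c + q.2 ∈ K}
  have hTcompact : IsCompact T := (isCompact_Icc.prod hK).inter_right <|
    isClosed_biInter fun c _ => hK.isClosed.preimage (by fun_prop)
  have hmemT : ∀ ρ ∈ S, ∃ t, (ρ, t) ∈ T := by
    rintro ρ ⟨hρ, t, ht⟩
    have ht' := smul_add_singleton_subset_iff.1 ht
    have htK : t ∈ K := by simpa using ht' 0 (mem_of_mem_nhds hC)
    exact ⟨t, ⟨⟨hρ.le, hb ⟨hρ, t, ht⟩⟩, htK⟩, mem_iInter₂.2 ht'⟩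
  obtain ⟨ρ₀, hρ₀⟩ := exists_pos_smul_add_singleton_subset hKint hCbdd
  obtain ⟨t₀, ht₀⟩ := hmemT ρ₀ hρ₀
  obtain ⟨⟨r, t⟩, ⟨_, hrt⟩, hmax⟩ :=
    hTcompact.exists_isMaxOn ⟨_, ht₀⟩ continuous_fst.continuousOn
  have hgreatest : IsGreatest S r := by
    refine ⟨⟨hρ₀.1.trans_le (hmax ht₀), t,
      smul_add_singleton_subset_iff.2 (mem_iInter₂.1 hrt)⟩, fun ρ hρ => ?_⟩
    obtain ⟨t', ht'⟩ := hmemT ρ hρ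
    exact hmax ht'
  rwa [inrad, hgreatest.csSup_eq]

theorem nonempty_circum (hK : IsBounded K) (hC : C ∈ 𝓝 0) :
    {ρ : ℝ | 0 < ρ ∧ ∃ t : E2, K ⊆ ρ • C + {t}}.Nonempty := by
  obtain ⟨ρ, hρ, hsub⟩ := exists_pos_subset_smul hK hC
  exact ⟨ρ, hρ, 0, by simpa using hsub⟩

theorem circum_le {ρ : ℝ} {t : E2} (hρ : 0 < ρ) (h : K ⊆ ρ • C + {t}) : circum K C ≤ ρ :=
  csInf_le ⟨0, fun _ hx => hx.1.le⟩ ⟨hρ, t, h⟩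

theorem le_circum_of_smul_add_singleton_subset (hK : IsBounded K) (hCbdd : IsBounded C)
    (hC : C ∈ 𝓝 0) {r : ℝ} {t : E2} (hr : 0 ≤ r) (h : r • C + {t} ⊆ K) : r ≤ circum K C := by
  refine le_csInf (nonempty_circum hK hC) ?_
  rintro ρ ⟨hρ, t', ht'⟩
  refine le_of_mul_le_mul_right ?_ (diam_pos_of_mem_nhds hCbdd hC)
  rw [← diam_smul_add_singleton hr (t := t), ← diam_smul_add_singleton hρ.le (t := t')]
  exact diam_mono (h.trans ht') ((hCbdd.smul₀ ρ).add isBounded_singleton)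

end Radii

section Polar

variable {K C : Set E2} {a : E2}

theorem mem_polarBody_iff : a ∈ polarBody C ↔ ∀ c ∈ C, ⟪a, c⟫ ≤ 1 :=
  forall₂_congr fun c _ => by rw [real_inner_comm]

theorem isClosed_polarBody (C : Set E2) : IsClosed (polarBody C) := by
  simp only [polarBody, ofPred_forall]
  exact isClosed_biInter fun c _ => isClosed_le (by fun_prop) continuous_const

theorem norm_le_inv_of_mem_polarBody {ε : ℝ} (hε : 0 < ε) (hC : closedBall 0 ε ⊆ C)
    (ha : a ∈ polarBody C) : ‖a‖ ≤ ε⁻¹ := by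
  rcases eq_or_ne a 0 with rfl | ha0
  · simpa using hε.le
  have hnorm : 0 < ‖a‖ := norm_pos_iff.2 ha0
  have hmem : (ε / ‖a‖) • a ∈ closedBall (0 : E2) ε := by
    rw [mem_closedBall_zero_iff, norm_smul, Real.norm_of_nonneg (by positivity),
      div_mul_cancel₀ _ hnorm.ne']
  have hinner : ε / ‖a‖ * ‖a‖ ^ 2 ≤ 1 := by
    simpa only [real_inner_smul_left, real_inner_self_eq_norm_sq] using ha _ (hC hmem)
  rw [le_inv_comm₀ hnorm hε, ← one_div, le_div_iff₀ hnorm]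
  calc ε * ‖a‖ = ε / ‖a‖ * ‖a‖ ^ 2 := by field_simp
    _ ≤ 1 := hinner

theorem isCompact_polarBody (hC : C ∈ 𝓝 0) : IsCompact (polarBody C) := by
  obtain ⟨ε, hε, hεC⟩ := nhds_basis_closedBall.mem_iff.1 hC
  exact (isCompact_closedBall (0 : E2) ε⁻¹).of_isClosed_subset (isClosed_polarBody C) fun a ha =>
    mem_closedBall_zero_iff.2 (norm_le_inv_of_mem_polarBody hε hεC ha)

theorem mem_smul_of_forall_polarBody (hconv : Convex ℝ C) (hclosed : IsClosed C) (h0 : 0 ∈ C)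
    {ρ : ℝ} (hρ : 0 < ρ) {x : E2} (hx : ∀ a ∈ polarBody C, ⟪a, x⟫ ≤ ρ) : x ∈ ρ • C := by
  by_contra hxC
  obtain ⟨a, u, hau, hux⟩ := exists_inner_lt_lt_inner_of_notMem (hconv.smul ρ)
    (hclosed.smul_of_ne_zero hρ.ne') hxC
  have hu : 0 < u := by simpa using hau (ρ • 0) (smul_mem_smul_set h0)
  have hpolar : (ρ / u) • a ∈ polarBody C := by
    refine mem_polarBody_iff.2 fun c hc => ?_
    have hcu := hau (ρ • c) (smul_mem_smul_set hc)
    rw [real_inner_smul_right] at hcu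
    rw [real_inner_smul_left, div_mul_eq_mul_div, div_le_one hu]
    exact hcu.le
  have hxρ := hx _ hpolar
  rw [real_inner_smul_left, div_mul_eq_mul_div, div_le_iff₀ hu] at hxρ
  exact hux.not_ge (le_of_mul_le_mul_left hxρ hρ)

/-- The outer normals, normalized to lie in the polar of `C`, of the supporting lines of `R • C + t`
at which `K` touches it. -/
def contactNormals (K C : Set E2) (t : E2) (R : ℝ) : Set E2 :=
  {a ∈ polarBody C | ∃ p ∈ K, ⟪a, p - t⟫ = R}

theorem isCompact_contactNormals (hK : IsCompact K) (hC : C ∈ 𝓝 0) (t : E2) (R : ℝ) :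
    IsCompact (contactNormals K C t R) := by
  have himage : contactNormals K C t R =
      Prod.fst '' (polarBody C ×ˢ K ∩ {q : E2 × E2 | ⟪q.1, q.2 - t⟫ = R}) := by
    ext a
    simp [contactNormals, and_assoc]
  rw [himage]
  refine (((isCompact_polarBody hC).prod hK).inter_right ?_).image continuous_fst
  exact isClosed_eq (by fun_prop) continuous_const

-- Otherwise some translation moves `K` away from all contact normals at once, and `K` then fits
-- into a smaller copy of `C`.
theorem zero_mem_convexHull_contactNormals (hK : IsCompact K) (hCconv : Convex ℝ C)
    (hCclosed : IsClosed C) (hC : C ∈ 𝓝 0) {t : E2} {R : ℝ} (hR : 0 < R)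
    (hKR : ∀ a ∈ polarBody C, ∀ k ∈ K, ⟪a, k - t⟫ ≤ R)
    (hopt : ∀ (ρ : ℝ) (t' : E2), 0 < ρ → K ⊆ ρ • C + {t'} → R ≤ ρ) :
    0 ∈ convexHull ℝ (contactNormals K C t R) := by
  by_contra h0
  obtain ⟨a₀, u, hu, hu0⟩ := exists_inner_lt_lt_inner_of_notMem
    (convex_convexHull ℝ (contactNormals K C t R))
    (isCompact_convexHull_of_isCompact (isCompact_contactNormals hK hC t R)).isClosed h0
  rw [inner_zero_right] at hu0
  obtain ⟨e, ρ, hρ, hρR, hle⟩ := exists_pos_forall_sub_mul_le ((isCompact_polarBody hC).prod hK)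
    (f := fun q => ⟪q.1, q.2 - t⟫) (g := fun q => ⟪q.1, -a₀⟫) (R := R) (by fun_prop) (by fun_prop)
    (fun q hq => hKR q.1 hq.1 q.2 hq.2)
    (fun q hq hqR => by
      have := hu q.1 (subset_convexHull ℝ _ ⟨hq.1, q.2, hq.2, hqR⟩)
      rw [inner_neg_right, real_inner_comm]
      linarith) hR
  refine hρR.not_ge (hopt ρ (t + e • -a₀) hρ ((subset_smul_add_singleton_iff).2 fun k hk => ?_))
  refine mem_smul_of_forall_polarBody hCconv hCclosed (mem_of_mem_nhds hC) hρ fun a ha => ?_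
  rw [← sub_sub, inner_sub_right, real_inner_smul_right]
  exact hle (a, k) ⟨ha, hk⟩

end Polar

section PseudoComplete

variable {K C : Set E2} {a : E2}

theorem abs_inner_le_one_of_mem_polarBody (hsymm : C = -C) (ha : a ∈ polarBody C) {c : E2}
    (hc : c ∈ C) : |⟪a, c⟫| ≤ 1 := by
  have hneg : -c ∈ C := neg_mem_of_eq_neg hsymm hc
  rw [abs_le', ← inner_neg_right]
  exact ⟨mem_polarBody_iff.1 ha c hc, mem_polarBody_iff.1 ha _ hneg⟩

theorem inner_sub_le_diamB (hK : IsBounded K) (hC : C ∈ 𝓝 0) (hsymm : C = -C)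
    (ha : a ∈ polarBody C) {k k' : E2} (hk : k ∈ K) (hk' : k' ∈ K) :
    ⟪a, k - k'⟫ ≤ diamB K C := by
  suffices h : ⟪a, k - k'⟫ / 2 ≤ circum (K - K) (C - C) by
    rw [diamB]
    linarith
  refine le_csInf (nonempty_circum (hK.sub hK) (sub_mem_nhds_zero hC)) ?_
  rintro ρ ⟨hρ, t, ht⟩
  have hbound : ∀ u ∈ ρ • (C - C), |⟪a, u⟫| ≤ 2 * ρ := by
    rintro _ ⟨_, ⟨c, hc, c', hc', rfl⟩, rfl⟩
    have h1 := abs_inner_le_one_of_mem_polarBody hsymm ha hc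
    have h2 := abs_inner_le_one_of_mem_polarBody hsymm ha hc'
    have h3 := abs_sub ⟪a, c⟫ ⟪a, c'⟫
    simp only [real_inner_smul_right, inner_sub_right, abs_mul, abs_of_pos hρ]
    nlinarith
  have ht' := subset_smul_add_singleton_iff.1 ht
  have h1 := (le_abs_self _).trans (hbound _ (ht' (k - k') ⟨k, hk, k', hk', rfl⟩))
  have h2 := (neg_le_abs _).trans (hbound _ (ht' (k' - k) ⟨k', hk', k, hk, rfl⟩))
  simp only [inner_sub_right] at h1 h2 ⊢
  linarith

theorem inner_sub_le_of_sub_mem_smul (hCcompact : IsCompact C) (hCne : C.Nonempty)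
    (hsymm : C = -C) {r R : ℝ} (hr : 0 ≤ r) (hR : 0 ≤ R) {t : E2} (ht : r • C + {t} ⊆ K)
    (hK : ∀ k ∈ K, ∀ k' ∈ K, k - k' ∈ (r + R) • C) (ha : a ∈ polarBody C) {k : E2} (hk : k ∈ K) :
    ⟪a, k - t⟫ ≤ R := by
  obtain ⟨c, hc, hmax⟩ := hCcompact.exists_isMaxOn hCne (f := fun c => ⟪a, c⟫) (by fun_prop)
  have hneg : -c ∈ C := neg_mem_of_eq_neg hsymm hc
  obtain ⟨c', hc', hkc'⟩ := hK k hk _ (smul_add_singleton_subset_iff.1 ht _ hneg)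
  have hkt : k - t = (r + R) • c' - r • c := by
    rw [show (r + R) • c' = k - (r • -c + t) from hkc']
    module
  calc ⟪a, k - t⟫ = (r + R) * ⟪a, c'⟫ - r * ⟪a, c⟫ := by
        rw [hkt, inner_sub_right, real_inner_smul_right, real_inner_smul_right]
    _ ≤ (r + R) * ⟪a, c⟫ - r * ⟪a, c⟫ := by
        have : ⟪a, c'⟫ ≤ ⟪a, c⟫ := hmax hc'
        gcongr
    _ = R * ⟪a, c⟫ := by ring
    _ ≤ R * 1 := by
        have := mem_polarBody_iff.1 ha c hc
        gcongr
    _ = R := mul_one R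

end PseudoComplete

section Factor

/-- The algebraic condition on a factor `c` which guarantees, for a planar convex body `K` of
Minkowski asymmetry `s > 1` with Minkowski center `0`, that `K ∩ (-K) ⊆ (c / 2) • (K - K)`. -/
structure IsAdmissibleFactor (s c : ℝ) : Prop where
  two_le_mul : 2 ≤ c * (s + 1)
  quadratic_nonneg : ∀ z, s - 1 ≤ z → z ≤ 1 →
    0 ≤ 2 * s * z ^ 2 - z * (s ^ 2 + 1 + (s ^ 2 - 1) * c) + (s + 1) ^ 2 * (s - 1) * c / 2

variable {s c : ℝ}

theorem IsAdmissibleFactor.pos (h : IsAdmissibleFactor s c) (hs : 1 < s) : 0 < c :=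
  pos_of_mul_pos_left (two_pos.trans_le h.two_le_mul) (by linarith)

theorem IsAdmissibleFactor.two_mul_le (h : IsAdmissibleFactor s c) (hs : 1 < s) {x y : ℝ}
    (hx : x ≤ 1) (hy : y ≤ 1) (hxy : s ≤ x + y) :
    2 * (y * ((s + 1) * (1 - y) + (s - 1) * x)) ≤
      c * ((s + 1) * (x + y - 1) * (s + 1 - 2 * y)) := by
  have hquad := h.quadratic_nonneg y (by linarith) hy
  have hlin : 0 ≤ c * (s + 1) * (s + 1 - 2 * y) / 2 - y * (s - 1) := by
    nlinarith [mul_le_mul_of_nonneg_right h.two_le_mul (show 0 ≤ s + 1 - 2 * y by linarith)]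
  linear_combination 2 * hquad + 2 * (x + y - s) * hlin

theorem le_half_mul_add_of_mul_le {L P Q m A B : ℝ} (hP : 0 < P) (hQ : 0 < Q) (hc : 0 ≤ c)
    (hm : 0 ≤ m) (hmA : m ≤ A) (hmB : m ≤ B) (hL : L * m ≤ P * A + Q * B)
    (hcP : 2 * P ≤ c * (L + P - Q)) (hcQ : 2 * Q ≤ c * (L + Q - P)) :
    m ≤ c / 2 * (A + B) := by
  wlog hPQ : Q ≤ P generalizing P Q A B
  · rw [add_comm A]
    exact this hQ hP hmB hmA (by linarith) hcQ hcP (le_of_not_ge hPQ)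
  have hmP : (L + P - Q) * m ≤ P * (A + B) := by
    linear_combination hL + (P - Q) * hmB
  refine le_of_mul_le_mul_left ?_ (show 0 < 2 * P by positivity)
  calc 2 * P * m ≤ c * (L + P - Q) * m := by gcongr
    _ = c * ((L + P - Q) * m) := by ring
    _ ≤ c * (P * (A + B)) := by gcongr
    _ = 2 * P * (c / 2 * (A + B)) := by ring

-- The lower bounds `hA`, `hB` are combined with the weights `P`, `Q` for which the middle value
-- `v₂` drops out.
theorem IsAdmissibleFactor.le_half_mul_add (h : IsAdmissibleFactor s c) (hs : 1 < s)
    {k₁ k₂ k₃ v₁ v₂ v₃ m A B : ℝ} (hk : k₁ + k₂ + k₃ = 1)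
    (hv : k₁ * v₁ + k₂ * v₂ + k₃ * v₃ = 0) (hk₁ : (s + 1) * k₁ ≤ 1) (hk₂ : (s + 1) * k₂ ≤ 1)
    (hk₃ : (s + 1) * k₃ ≤ 1) (hm : 0 ≤ m) (hmA : m ≤ A) (hmB : m ≤ B)
    (hmv : m ≤ k₁ * (v₁ - v₂) + k₃ * (v₂ - v₃))
    (hA : (s + 1) * k₁ * v₁ + (1 - (s + 1) * k₁) * v₃ ≤ A)
    (hB : -((s + 1) * k₃ * v₃ + (1 - (s + 1) * k₃) * v₁) ≤ B) :
    m ≤ c / 2 * (A + B) := by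
  obtain rfl : k₂ = 1 - k₁ - k₃ := by linarith
  set l₁ := (s + 1) * k₁ with hl₁
  set l₃ := (s + 1) * k₃ with hl₃
  have hl : s ≤ l₁ + l₃ := by linarith
  set L := (s + 1) * (s + 1 - l₁ - l₃) * (l₁ + l₃ - 1) with hL
  set P := l₃ * ((s + 1) * (1 - l₃) + (s - 1) * l₁) with hP
  set Q := l₁ * ((s + 1) * (1 - l₁) + (s - 1) * l₃) with hQ
  have hPpos : 0 < P := mul_pos (by linarith) (by nlinarith)
  have hQpos : 0 < Q := mul_pos (by linarith) (by nlinarith)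
  have hLm : L * m ≤ P * A + Q * B :=
    calc L * m ≤ L * (k₁ * (v₁ - v₂) + k₃ * (v₂ - v₃)) := by
          have : 0 ≤ L := mul_nonneg (mul_nonneg (by linarith) (by linarith)) (by linarith)
          gcongr
      _ = P * (l₁ * v₁ + (1 - l₁) * v₃) + Q * -(l₃ * v₃ + (1 - l₃) * v₁) := by
          linear_combination (norm := (simp only [hL, hP, hQ, hl₁, hl₃]; ring))
            (s + 1) ^ 2 * (l₁ + l₃ - 1) * (k₃ - k₁) * hv
      _ ≤ P * A + Q * B := by gcongr
  refine le_half_mul_add_of_mul_le hPpos hQpos (h.pos hs).le hm hmA hmB hLm ?_ ?_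
  · exact (h.two_mul_le hs hk₁ hk₃ hl).trans_eq (by ring)
  · exact (h.two_mul_le hs hk₃ hk₁ (by linarith)).trans_eq (by ring)

end Factor

section FactorFunction

variable {s : ℝ}

theorem one_lt_phiR : 1 < phiR := Real.one_lt_goldenRatio

theorem phiR_lt_two : phiR < 2 := Real.goldenRatio_lt_two

theorem phiR_sq : phiR ^ 2 = phiR + 1 := Real.goldenRatio_sq

theorem sq_sqrt_mul_sq_sub_one (hs : 1 < s) : √(s * (s ^ 2 - 1)) ^ 2 = s * (s ^ 2 - 1) :=
  Real.sq_sqrt (mul_nonneg (by linarith) (by nlinarith))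

theorem mul_cExpr2_eq (hs : 1 < s) :
    (s ^ 2 - 1) * cExpr2 s = s ^ 2 + 2 * s - 1 - 2 * √(s * (s ^ 2 - 1)) := by
  have hs1 : 0 < s ^ 2 - 1 := by nlinarith
  have hden : 0 < s ^ 2 + 2 * s - 1 + 2 * √(s * (s ^ 2 - 1)) := by
    nlinarith [Real.sqrt_nonneg (s * (s ^ 2 - 1))]
  rw [cExpr2, ← mul_div_assoc, div_eq_iff (by positivity)]
  linear_combination 4 * (s ^ 2 - 1) * sq_sqrt_mul_sq_sub_one hs

theorem cExpr3_mul_eq (hs : 1 < s) (hs3 : s < 3) :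
    cExpr3 s * ((3 - s) * (s + 1)) = 2 * (1 + 2 * s - s ^ 2) := by
  have h3 : s - 3 ≠ 0 := by linarith
  have h1 : s + 1 ≠ 0 := by linarith
  rw [cExpr3]
  field_simp
  ring

theorem two_mul_sqrt_le (hs : 1 < s) : 2 * √(s * (s ^ 2 - 1)) ≤ s ^ 2 + 1 := by
  refine abs_le_of_sq_le_sq' ?_ (by positivity) |>.2
  rw [mul_pow, sq_sqrt_mul_sq_sub_one hs]
  nlinarith [sq_nonneg (s ^ 2 - 2 * s - 1)]

-- `cExpr2 s` is the factor for which the discriminant of the quadratic vanishes.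
theorem isAdmissibleFactor_cExpr2 (hs : 1 < s) : IsAdmissibleFactor s (cExpr2 s) := by
  have hc := mul_cExpr2_eq hs
  refine ⟨?_, fun z _ _ => ?_⟩
  · refine le_of_mul_le_mul_left ?_ (sub_pos.2 hs)
    linear_combination two_mul_sqrt_le hs - hc
  · have hdisc : (s ^ 2 + 1 + (s ^ 2 - 1) * cExpr2 s) ^ 2 =
        4 * s * (s + 1) * ((s ^ 2 - 1) * cExpr2 s) := by
      rw [hc]
      linear_combination 4 * sq_sqrt_mul_sq_sub_one hs
    refine nonneg_of_mul_nonneg_right ?_ (show 0 < 8 * s by linarith)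
    calc 0 ≤ (4 * s * z - (s ^ 2 + 1 + (s ^ 2 - 1) * cExpr2 s)) ^ 2 := sq_nonneg _
      _ = _ := by linear_combination hdisc

-- `cExpr3 s` is the factor for which the quadratic vanishes at the left endpoint `s - 1`.
theorem isAdmissibleFactor_cExpr3 (hs : 1 < s) (hs2 : s ≤ 2)
    (hcubic : s ^ 3 - 7 * s ^ 2 + 9 * s + 1 ≤ 0) : IsAdmissibleFactor s (cExpr3 s) := by
  have hc := cExpr3_mul_eq hs (by linarith)
  refine ⟨?_, fun z hz _ => ?_⟩
  · refine le_of_mul_le_mul_left ?_ (show 0 < 3 - s by linarith)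
    nlinarith
  · refine nonneg_of_mul_nonneg_right ?_ (show 0 < 3 - s by linarith)
    have hz' : 2 * s * (3 - s) * (s - 1) ≤ 2 * s * (3 - s) * z :=
      mul_le_mul_of_nonneg_left hz (by nlinarith)
    calc 0 ≤ (z - (s - 1)) * (2 * s * (3 - s) * z - (1 + s) * (1 + 2 * s - s ^ 2)) :=
          mul_nonneg (by linarith) (by linarith)
      _ = _ := by linear_combination (z * (s - 1) - (s + 1) * (s - 1) / 2) * hc

theorem cExpr2_eq_cExpr3_iff (hs : 1 < s) (hs3 : s < 3) :
    cExpr2 s = cExpr3 s ↔ s ^ 3 - 7 * s ^ 2 + 9 * s + 1 = 0 := by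
  have hs1 : 0 < s ^ 2 - 1 := by nlinarith
  have hc₂ := mul_cExpr2_eq hs
  have hc₃ := cExpr3_mul_eq hs hs3
  have hsq := sq_sqrt_mul_sq_sub_one hs
  set q := √(s * (s ^ 2 - 1))
  have hdiff : (cExpr2 s - cExpr3 s) * ((s ^ 2 - 1) * (3 - s)) =
      s ^ 3 - 5 * s ^ 2 + 9 * s - 1 - 2 * q * (3 - s) := by
    linear_combination (3 - s) * hc₂ - (s - 1) * hc₃
  have hcubic : (s ^ 3 - 7 * s ^ 2 + 9 * s + 1) ^ 2 =
      (s ^ 3 - 5 * s ^ 2 + 9 * s - 1) ^ 2 - (2 * q * (3 - s)) ^ 2 := by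
    linear_combination 4 * (3 - s) ^ 2 * hsq
  have hpos : 0 ≤ s ^ 3 - 5 * s ^ 2 + 9 * s - 1 := by
    nlinarith [mul_nonneg (sub_pos.2 hs).le (sq_nonneg (s - 2))]
  have hq0 : 0 ≤ 2 * q * (3 - s) := mul_nonneg (by positivity) (by linarith)
  have hden : (s ^ 2 - 1) * (3 - s) ≠ 0 := (mul_pos hs1 (by linarith)).ne'
  calc cExpr2 s = cExpr3 s ↔ (cExpr2 s - cExpr3 s) * ((s ^ 2 - 1) * (3 - s)) = 0 := by
        rw [mul_eq_zero_iff_right hden, sub_eq_zero]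
    _ ↔ (s ^ 3 - 5 * s ^ 2 + 9 * s - 1) ^ 2 - (2 * q * (3 - s)) ^ 2 = 0 := by
        rw [hdiff, sub_eq_zero, sub_eq_zero, sq_eq_sq₀ hpos hq0]
    _ ↔ s ^ 3 - 7 * s ^ 2 + 9 * s + 1 = 0 := by
        rw [← hcubic, sq_eq_zero_iff]

theorem strictAntiOn_cubic :
    StrictAntiOn (fun x : ℝ => x ^ 3 - 7 * x ^ 2 + 9 * x + 1) (Icc 1 2) := by
  rintro x ⟨hx1, hx2⟩ y ⟨hy1, hy2⟩ hxy
  have hfactor : x ^ 2 + x * y + y ^ 2 - 7 * (x + y) + 9 < 0 := by nlinarith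
  simp only
  linear_combination (y - x) * hfactor

theorem exists_cubic_eq_zero :
    ∃ x ∈ Ioo phiR 2, x ^ 3 - 7 * x ^ 2 + 9 * x + 1 = 0 := by
  have hcont : Continuous fun x : ℝ => x ^ 3 - 7 * x ^ 2 + 9 * x + 1 := by fun_prop
  refine intermediate_value_Ioo' phiR_lt_two.le hcont.continuousOn ⟨by norm_num, ?_⟩
  have hcubic : phiR ^ 3 - 7 * phiR ^ 2 + 9 * phiR + 1 = 4 * phiR - 5 := by
    linear_combination (phiR - 6) * phiR_sq
  change 0 < phiR ^ 3 - 7 * phiR ^ 2 + 9 * phiR + 1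
  nlinarith [phiR_sq, one_lt_phiR]

theorem cubic_nonpos_of_sHat_lt (hs : sHat < s) (hs2 : s ≤ 2) :
    s ^ 3 - 7 * s ^ 2 + 9 * s + 1 ≤ 0 := by
  have hiff : ∀ x, phiR < x → x < 2 → (cExpr2 x = cExpr3 x ↔ x ^ 3 - 7 * x ^ 2 + 9 * x + 1 = 0) :=
    fun x hx hx2 => cExpr2_eq_cExpr3_iff (one_lt_phiR.trans hx) (by linarith)
  have hne : {x | phiR < x ∧ x < 2 ∧ cExpr2 x = cExpr3 x}.Nonempty := by
    obtain ⟨x, ⟨hφx, hx2⟩, hx⟩ := exists_cubic_eq_zero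
    exact ⟨x, hφx, hx2, (hiff x hφx hx2).2 hx⟩
  obtain ⟨x, ⟨hφx, hx2, hx⟩, hxs⟩ := exists_lt_of_csInf_lt hne hs
  have hx1 := one_lt_phiR.trans hφx
  exact (strictAntiOn_cubic ⟨hx1.le, hx2.le⟩ ⟨by linarith, hs2⟩ hxs).le.trans_eq
    ((hiff x hφx hx2).1 hx)

theorem isAdmissibleFactor_cFun (hs : phiR < s) (hs2 : s ≤ 2) : IsAdmissibleFactor s (cFun s) := by
  have hs1 := one_lt_phiR.trans hs
  rw [cFun, if_neg hs.not_ge]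
  split_ifs with hsHat
  · exact isAdmissibleFactor_cExpr2 hs1
  · exact isAdmissibleFactor_cExpr3 hs1 hs2 (cubic_nonpos_of_sHat_lt (not_le.1 hsHat) hs2)

end FactorFunction

section Frame

/-- A certificate that `K` has Minkowski asymmetry at least `s`, located at the center `t`: the
half-spaces `{x | ⟪normal i, x - t⟫ ≤ 1}` contain `K`, the point `vertex i` of `K` lies `s` times as
far on the other side of `t`, and `0` is a convex combination of the normals. -/
structure AsymmetryFrame {E : Type*} [NormedAddCommGroup E] [InnerProductSpace ℝ E]
    (ι : Type*) [Fintype ι] (K : Set E) (t : E) (s : ℝ) where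
  normal : ι → E
  vertex : ι → E
  weight : ι → ℝ
  vertex_mem : ∀ i, vertex i ∈ K
  inner_normal_le : ∀ x ∈ K, ∀ i, ⟪normal i, x - t⟫ ≤ 1
  inner_normal_vertex : ∀ i, ⟪normal i, vertex i - t⟫ = -s
  weight_mem : weight ∈ stdSimplex ℝ ι
  sum_weight_smul_normal : ∑ i, weight i • normal i = 0

theorem linearIndependent_pair_of_abs_inner_lt {E : Type*} [NormedAddCommGroup E]
    [InnerProductSpace ℝ E] {x y u w : E} (hx : |⟪x, w⟫| < |⟪x, u⟫|) (hy : |⟪y, u⟫| < |⟪y, w⟫|) :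
    LinearIndependent ℝ ![x, y] := by
  refine LinearIndependent.pair_iff.2 fun α β h => ?_
  have habs : ∀ z, |α| * |⟪x, z⟫| = |β| * |⟪y, z⟫| := by
    intro z
    have hz : α * ⟪x, z⟫ + β * ⟪y, z⟫ = 0 := by
      simpa only [inner_add_left, real_inner_smul_left, inner_zero_left] using congrArg (⟪·, z⟫) h
    rw [← abs_mul, ← abs_mul, eq_neg_of_add_eq_zero_left hz, abs_neg]
  have hα : α = 0 := by
    by_contra hα
    have hlt := mul_lt_mul_of_pos_left hx (abs_pos.2 hα)
    have hle := mul_le_mul_of_nonneg_left hy.le (abs_nonneg β)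
    linarith [habs u, habs w]
  have hβ : |β| * |⟪y, w⟫| = 0 := by simpa [hα] using (habs w).symm
  have hyw : |⟪y, w⟫| ≠ 0 := ((abs_nonneg _).trans_lt hy).ne'
  exact ⟨hα, abs_eq_zero.1 ((mul_eq_zero.1 hβ).resolve_right hyw)⟩

theorem mul_add_one_sub_mul_le_sum {ι : Type*} [Fintype ι] {w v : ι → ℝ} (hw : w ∈ stdSimplex ℝ ι)
    {θ : ℝ} (hθ : ∀ j, θ ≤ v j) (i : ι) : w i * v i + (1 - w i) * θ ≤ ∑ j, w j * v j := by
  have hle : w i * (v i - θ) ≤ ∑ j, w j * (v j - θ) :=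
    Finset.single_le_sum (f := fun j => w j * (v j - θ))
      (fun j _ => mul_nonneg (hw.1 j) (sub_nonneg.2 (hθ j))) (Finset.mem_univ i)
  simp only [mul_sub, Finset.sum_sub_distrib, ← Finset.sum_mul, hw.2] at hle
  linarith

namespace AsymmetryFrame

variable {E : Type*} [NormedAddCommGroup E] [InnerProductSpace ℝ E]
  {ι : Type*} [Fintype ι] {K : Set E} {t : E} {s : ℝ}

theorem sum_weight_mul_inner (F : AsymmetryFrame ι K t s) (y : E) :
    ∑ i, F.weight i * ⟪F.normal i, y⟫ = 0 := by
  simp only [← real_inner_smul_left, ← sum_inner, F.sum_weight_smul_normal, inner_zero_left]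

theorem le_of_sub_subset (F : AsymmetryFrame ι K t s) {ρ : ℝ} (hρ : 0 ≤ ρ) {c : E}
    (hc : K - {c} ⊆ ρ • ({c} - K)) : s ≤ ρ := by
  have hle : ∀ i, s - ρ ≤ -(1 + ρ) * ⟪F.normal i, c - t⟫ := by
    intro i
    obtain ⟨_, ⟨_, rfl, x, hx, rfl⟩, hxc⟩ := hc ⟨F.vertex i, F.vertex_mem i, c, rfl, rfl⟩
    have hinner := congrArg (fun z => ⟪F.normal i, z⟫) hxc
    have hxle := mul_le_mul_of_nonneg_left (F.inner_normal_le x hx i) hρ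
    have hvertex := F.inner_normal_vertex i
    simp only [inner_sub_right, real_inner_smul_right] at hinner hxle hvertex ⊢
    linarith
  have hsum : ∑ i, F.weight i * (s - ρ) ≤ ∑ i, F.weight i * (-(1 + ρ) * ⟪F.normal i, c - t⟫) :=
    Finset.sum_le_sum fun i _ => mul_le_mul_of_nonneg_left (hle i) (F.weight_mem.1 i)
  simp only [mul_left_comm (F.weight _), ← Finset.mul_sum, F.sum_weight_mul_inner, ← Finset.sum_mul,
    F.weight_mem.2] at hsum
  linarith

/-- The barycentric coordinates of `y` with respect to the simplex cut out by the half-spaces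
`{x | ⟪normal i, x - t⟫ ≤ 1}`; those of `t` are the weights. -/
def coord (F : AsymmetryFrame ι K t s) (y : E) (i : ι) : ℝ :=
  F.weight i * (1 - ⟪F.normal i, y - t⟫)

theorem sum_coord (F : AsymmetryFrame ι K t s) (y : E) : ∑ i, F.coord y i = 1 := by
  simp only [coord, mul_sub, mul_one, Finset.sum_sub_distrib, F.weight_mem.2,
    F.sum_weight_mul_inner, sub_zero]

theorem coord_mem_stdSimplex (F : AsymmetryFrame ι K t s) {y : E} (hy : y ∈ K) :
    F.coord y ∈ stdSimplex ℝ ι :=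
  ⟨fun i => mul_nonneg (F.weight_mem.1 i) (sub_nonneg.2 (F.inner_normal_le y hy i)), F.sum_coord y⟩

theorem coord_center (F : AsymmetryFrame ι K t s) : F.coord t = F.weight := by
  ext i
  simp [coord]

theorem coord_vertex (F : AsymmetryFrame ι K t s) (i : ι) :
    F.coord (F.vertex i) i = (s + 1) * F.weight i := by
  rw [coord, F.inner_normal_vertex]
  ring

theorem mul_weight_le_one (F : AsymmetryFrame ι K t s) (i : ι) : (s + 1) * F.weight i ≤ 1 :=
  F.coord_vertex i ▸ stdSimplex.le_one ⟨_, F.coord_mem_stdSimplex (F.vertex_mem i)⟩ i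

theorem add_one_le_card (F : AsymmetryFrame ι K t s) : s + 1 ≤ Fintype.card ι :=
  calc s + 1 = ∑ i, (s + 1) * F.weight i := by rw [← Finset.mul_sum, F.weight_mem.2, mul_one]
    _ ≤ ∑ _i : ι, 1 := Finset.sum_le_sum fun i _ => F.mul_weight_le_one i
    _ = Fintype.card ι := by simp

section Functional

variable {a : E} {v : ι → ℝ}

theorem sum_weight_mul_eq_zero (F : AsymmetryFrame ι K t s)
    (hv : ∀ y, ⟪a, y - t⟫ = ∑ i, F.coord y i * v i) : ∑ i, F.weight i * v i = 0 := by
  simpa [F.coord_center] using (hv t).symm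

theorem le_inner_vertex (F : AsymmetryFrame ι K t s)
    (hv : ∀ y, ⟪a, y - t⟫ = ∑ i, F.coord y i * v i) {θ : ℝ} (hθ : ∀ j, θ ≤ v j) (i : ι) :
    (s + 1) * F.weight i * v i + (1 - (s + 1) * F.weight i) * θ ≤ ⟪a, F.vertex i - t⟫ := by
  rw [hv, ← F.coord_vertex]
  exact mul_add_one_sub_mul_le_sum (F.coord_mem_stdSimplex (F.vertex_mem i)) hθ i

theorem inner_vertex_le (F : AsymmetryFrame ι K t s)
    (hv : ∀ y, ⟪a, y - t⟫ = ∑ i, F.coord y i * v i) {θ : ℝ} (hθ : ∀ j, v j ≤ θ) (i : ι) :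
    ⟪a, F.vertex i - t⟫ ≤ (s + 1) * F.weight i * v i + (1 - (s + 1) * F.weight i) * θ := by
  have hneg := F.le_inner_vertex (a := -a) (v := -v) (θ := -θ)
    (fun y => by simp [inner_neg_left, hv]) (fun j => neg_le_neg (hθ j)) i
  simp only [inner_neg_left, Pi.neg_apply] at hneg
  linarith

theorem inner_le_sum_weight_mul_abs (F : AsymmetryFrame ι K t s)
    (hv : ∀ y, ⟪a, y - t⟫ = ∑ i, F.coord y i * v i) (θ : ℝ) {x : E} (hadd : t + x ∈ K)
    (hsub : t - x ∈ K) : ⟪a, x⟫ ≤ ∑ i, F.weight i * |v i - θ| := by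
  have habs : ∀ i, |⟪F.normal i, x⟫| ≤ 1 := by
    intro i
    rw [abs_le', ← inner_neg_right]
    exact ⟨by simpa using F.inner_normal_le _ hadd i, by simpa using F.inner_normal_le _ hsub i⟩
  calc ⟪a, x⟫ = ∑ i, F.weight i * (-⟪F.normal i, x⟫ * (v i - θ)) := by
        have hx := hv (t + x)
        simp only [coord, add_sub_cancel_left] at hx
        calc ⟪a, x⟫ = ∑ i, F.weight i * v i - ∑ i, F.weight i * (⟪F.normal i, x⟫ * v i) := by
              rw [hx, ← Finset.sum_sub_distrib]
              exact Finset.sum_congr rfl fun i _ => by ring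
          _ = θ * ∑ i, F.weight i * ⟪F.normal i, x⟫
              - ∑ i, F.weight i * (⟪F.normal i, x⟫ * v i) := by
              rw [F.sum_weight_mul_eq_zero hv, F.sum_weight_mul_inner, mul_zero]
          _ = ∑ i, F.weight i * (-⟪F.normal i, x⟫ * (v i - θ)) := by
              rw [Finset.mul_sum, ← Finset.sum_sub_distrib]
              exact Finset.sum_congr rfl fun i _ => by ring
    _ ≤ ∑ i, F.weight i * |v i - θ| := by
        refine Finset.sum_le_sum fun i _ => mul_le_mul_of_nonneg_left ?_ (F.weight_mem.1 i)
        refine (le_abs_self _).trans ?_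
        rw [abs_mul, abs_neg]
        exact mul_le_of_le_one_left (abs_nonneg _) (habs i)

end Functional

section Triangle

theorem one_lt_mul_weight_add_weight (F : AsymmetryFrame (Fin 3) K t s) (hs : 1 < s) {i j : Fin 3}
    (hij : i ≠ j) : 1 < (s + 1) * (F.weight i + F.weight j) := by
  obtain ⟨k, hik, hjk, huniv⟩ :
      ∃ k, i ≠ k ∧ j ≠ k ∧ (Finset.univ : Finset (Fin 3)) = {i, j, k} := by
    decide +revert
  have hsum := F.weight_mem.2
  rw [huniv, Finset.sum_insert (by simp [hij, hik]), Finset.sum_pair hjk] at hsum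
  have hk := F.mul_weight_le_one k
  rw [show F.weight i + F.weight j = 1 - F.weight k by linarith]
  linarith

theorem weight_pos (F : AsymmetryFrame (Fin 3) K t s) (hs : 1 < s) (i : Fin 3) :
    0 < F.weight i := by
  have hi : i ≠ i + 1 := by simp
  have hpair := F.one_lt_mul_weight_add_weight hs hi
  have hle := F.mul_weight_le_one (i + 1)
  exact pos_of_mul_pos_right (a := s + 1) (by linarith) (by linarith)

theorem abs_inner_normal_vertex_lt (F : AsymmetryFrame (Fin 3) K t s) (hs : 1 < s) {i j : Fin 3}
    (hij : i ≠ j) : |⟪F.normal i, F.vertex j - t⟫| < |⟪F.normal i, F.vertex i - t⟫| := by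
  have hle := F.inner_normal_le _ (F.vertex_mem j) i
  have hcoord : F.coord (F.vertex j) i + F.coord (F.vertex j) j ≤ 1 := by
    rw [← Finset.sum_pair hij, ← F.sum_coord (F.vertex j)]
    exact Finset.sum_le_univ_sum_of_nonneg (F.coord_mem_stdSimplex (F.vertex_mem j)).1
  have hlt : F.weight i * (1 - ⟪F.normal i, F.vertex j - t⟫) < F.weight i * (s + 1) := by
    rw [F.coord_vertex] at hcoord
    have := F.one_lt_mul_weight_add_weight hs hij
    rw [coord] at hcoord
    linarith
  have hgt := lt_of_mul_lt_mul_left hlt (F.weight_pos hs i).le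
  rw [F.inner_normal_vertex, abs_neg, abs_of_pos (show 0 < s by linarith), abs_lt]
  constructor <;> linarith

theorem exists_inner_eq_sum_coord (F : AsymmetryFrame (Fin 3) K t s) (hs : 1 < s)
    (hE : Module.finrank ℝ E = 2) (a : E) :
    ∃ v : Fin 3 → ℝ, ∀ y, ⟪a, y - t⟫ = ∑ i, F.coord y i * v i := by
  have hli : LinearIndependent ℝ ![F.normal 0, F.normal 1] :=
    linearIndependent_pair_of_abs_inner_lt (F.abs_inner_normal_vertex_lt hs (by decide))
      (F.abs_inner_normal_vertex_lt hs (by decide))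
  have : FiniteDimensional ℝ E := .of_finrank_pos (by omega)
  have hspan := hli.span_eq_top_of_card_eq_finrank' (by simp [hE])
  have ha : a ∈ Submodule.span ℝ {F.normal 0, F.normal 1} := by
    rw [← Matrix.range_cons_cons_empty, hspan]
    trivial
  obtain ⟨α, β, rfl⟩ := Submodule.mem_span_pair.1 ha
  have h0 := (F.weight_pos hs 0).ne'
  have h1 := (F.weight_pos hs 1).ne'
  refine ⟨![α + β - α / F.weight 0, α + β - β / F.weight 1, α + β], fun y => ?_⟩
  have hsum := F.sum_coord y
  have hcancel : ∀ {w γ : ℝ}, w ≠ 0 → ∀ u, w * u * (γ / w) = γ * u := by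
    intro w γ hw u
    field_simp
  simp only [Fin.sum_univ_three, coord, Matrix.cons_val, inner_add_left,
    real_inner_smul_left] at hsum ⊢
  linear_combination -(α + β) * hsum + hcancel (γ := α) h0 (1 - ⟪F.normal 0, y - t⟫)
    + hcancel (γ := β) h1 (1 - ⟪F.normal 1, y - t⟫)

theorem inner_le_half_mul_add (F : AsymmetryFrame (Fin 3) K t s) (hs : 1 < s)
    (hE : Module.finrank ℝ E = 2) {c : ℝ} (hc : IsAdmissibleFactor s c) {a x : E}
    (hadd : t + x ∈ K) (hsub : t - x ∈ K) {A B : ℝ} (hA : ∀ y ∈ K, ⟪a, y - t⟫ ≤ A)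
    (hB : ∀ y ∈ K, -⟪a, y - t⟫ ≤ B) : ⟪a, x⟫ ≤ c / 2 * (A + B) := by
  have haddA : ⟪a, x⟫ ≤ A := by simpa using hA _ hadd
  have hsubA : -⟪a, x⟫ ≤ A := by simpa using hA _ hsub
  have haddB : -⟪a, x⟫ ≤ B := by simpa using hB _ hadd
  have hsubB : ⟪a, x⟫ ≤ B := by simpa using hB _ hsub
  rcases lt_or_ge ⟪a, x⟫ 0 with hneg | hnonneg
  · have := hc.pos hs
    exact hneg.le.trans (mul_nonneg (by positivity) (by linarith))
  obtain ⟨v, hv⟩ := F.exists_inner_eq_sum_coord hs hE a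
  set σ := Tuple.sort v
  have hmono : Monotone (v ∘ σ) := Tuple.monotone_sort v
  have hsum : ∀ f : Fin 3 → ℝ, ∑ i, f i = f (σ 2) + f (σ 1) + f (σ 0) := by
    intro f
    rw [← Equiv.sum_comp σ, Fin.sum_univ_three]
    ring
  have hlow : ∀ j, v (σ 0) ≤ v j := σ.forall_congr_right.1 fun j => hmono (Fin.zero_le j)
  have hhigh : ∀ j, v j ≤ v (σ 2) := σ.forall_congr_right.1 fun j => hmono (Fin.le_last j)
  have habs := F.inner_le_sum_weight_mul_abs hv (v (σ 1)) hadd hsub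
  rw [hsum, sub_self, abs_zero, mul_zero, add_zero, abs_of_nonneg (sub_nonneg.2 (hhigh _)),
    abs_sub_comm, abs_of_nonneg (sub_nonneg.2 (hlow _))] at habs
  exact hc.le_half_mul_add hs ((hsum F.weight).symm.trans F.weight_mem.2)
    ((hsum fun i => F.weight i * v i).symm.trans (F.sum_weight_mul_eq_zero hv))
    (F.mul_weight_le_one _) (F.mul_weight_le_one _) (F.mul_weight_le_one _) hnonneg haddA hsubB
    habs ((F.le_inner_vertex hv hlow _).trans (hA _ (F.vertex_mem _)))
    ((neg_le_neg (F.inner_vertex_le hv hhigh _)).trans (hB _ (F.vertex_mem _)))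

theorem mem_half_smul_sub (F : AsymmetryFrame (Fin 3) K t s) (hs : 1 < s)
    (hE : Module.finrank ℝ E = 2) {c : ℝ} (hc : IsAdmissibleFactor s c) (hKconv : Convex ℝ K)
    (hK : IsCompact K) {x : E} (hadd : t + x ∈ K) (hsub : t - x ∈ K) :
    x ∈ (c / 2) • (K - K) := by
  have : FiniteDimensional ℝ E := .of_finrank_pos (by omega)
  have : CompleteSpace E := FiniteDimensional.complete ℝ E
  have hKK : IsCompact (K - K) := by
    rw [sub_eq_add_neg]
    exact hK.add hK.neg
  refine mem_of_forall_exists_inner_le ((hKconv.sub hKconv).smul _)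
    (hKK.smul (c / 2)).isClosed fun a => ?_
  have hcont : Continuous fun y => ⟪a, y⟫ := by fun_prop
  obtain ⟨y, hy, hmax⟩ := hK.exists_isMaxOn ⟨_, hadd⟩ hcont.continuousOn
  obtain ⟨z, hz, hmin⟩ := hK.exists_isMinOn ⟨_, hadd⟩ hcont.continuousOn
  refine ⟨(c / 2) • (y - z), smul_mem_smul_set (sub_mem_sub hy hz), ?_⟩
  refine (F.inner_le_half_mul_add hs hE hc hadd hsub (A := ⟪a, y - t⟫) (B := -⟪a, z - t⟫)
    (fun u hu => ?_) fun u hu => ?_).trans_eq ?_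
  · have : ⟪a, u⟫ ≤ ⟪a, y⟫ := hmax hu
    simpa only [inner_sub_right] using sub_le_sub_right this _
  · have : ⟪a, z⟫ ≤ ⟪a, u⟫ := hmin hu
    simpa only [inner_sub_right] using neg_le_neg (sub_le_sub_right this _)
  · rw [real_inner_smul_right]
    simp only [inner_sub_right]
    ring

end Triangle

theorem minkAsym_eq {K : Set E2} {t : E2} (F : AsymmetryFrame ι K t s) (hs : 0 < s)
    (h : K - {t} ⊆ s • ({t} - K)) : minkAsym K = s :=
  IsLeast.csInf_eq ⟨⟨hs, t, h⟩, fun _ ⟨hρ, _, hc⟩ => F.le_of_sub_subset hρ.le hc⟩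

end AsymmetryFrame

end Frame

section DiameterWidthRatio

variable {K C : Set E2} {t : E2}

theorem nonempty_asymmetryFrame {r R : ℝ} (hr : 0 < r)
    (hK : ∀ a ∈ polarBody C, ∀ k ∈ K, ∀ k' ∈ K, ⟪a, k - k'⟫ ≤ r + R)
    (h0 : 0 ∈ convexHull ℝ (contactNormals K C t R)) :
    Nonempty (AsymmetryFrame (Fin 3) K t (R / r)) := by
  have hcomb := exists_stdSimplex_of_mem_convexHull h0
  rw [finrank_euclideanSpace_fin] at hcomb
  obtain ⟨a, w, hw, ha, hsum⟩ := hcomb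
  choose hapolar p hpK hpR using ha
  refine ⟨⟨fun i => -r⁻¹ • a i, p, w, hpK, fun x hx i => ?_, fun i => ?_, hw, ?_⟩⟩
  · have hpx := hK (a i) (hapolar i) (p i) (hpK i) x hx
    rw [← sub_sub_sub_cancel_right (p i) x t, inner_sub_right, hpR] at hpx
    rw [real_inner_smul_left, neg_mul, ← mul_neg, inv_mul_le_one₀ hr]
    linarith
  · rw [real_inner_smul_left, hpR]
    ring
  · simp only [smul_comm (w _), ← Finset.smul_sum, hsum, smul_zero]

theorem sub_singleton_subset_smul {r R : ℝ} (hr : 0 < r) (hsymm : C = -C)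
    (hrt : r • C + {t} ⊆ K) (hRt : K ⊆ R • C + {t}) : K - {t} ⊆ (R / r) • ({t} - K) := by
  rw [smul_add_singleton_subset_iff] at hrt
  rw [subset_smul_add_singleton_iff] at hRt
  rintro _ ⟨k, hk, _, rfl, rfl⟩
  obtain ⟨c, hc, hck⟩ := hRt k hk
  have hneg : -c ∈ C := neg_mem_of_eq_neg hsymm hc
  refine ⟨_, ⟨_, rfl, _, hrt _ hneg, rfl⟩, ?_⟩
  calc (R / r) • (_ - (r • -c + _)) = (R / r * r) • c := by module
    _ = k - _ := by rw [div_mul_cancel₀ _ hr.ne', ← hck]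

theorem minkAsym_nonneg (K : Set E2) : 0 ≤ minkAsym K :=
  Real.sInf_nonneg fun _ hρ => hρ.1.le

theorem IsConvexBody.mem_nhds_zero (hC : IsConvexBody C) (hsymm : C = -C) : C ∈ 𝓝 0 :=
  mem_nhds_zero_of_eq_neg hC.1 hsymm hC.2.2

theorem IsConvexBody.isGreatest_inrad (hK : IsConvexBody K) (hC : IsConvexBody C)
    (hsymm : C = -C) : IsGreatest {ρ : ℝ | 0 < ρ ∧ ∃ t : E2, ρ • C + {t} ⊆ K} (inrad K C) :=
  _root_.isGreatest_inrad hK.2.1 hK.2.2 hC.2.1.isBounded (hC.mem_nhds_zero hsymm)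

theorem IsConvexBody.exists_asymmetryFrame (hK : IsConvexBody K) (hC : IsConvexBody C)
    (hsymm : C = -C) (hpc : inrad K C + circum K C = diamB K C) :
    ∃ t, inrad K C • C + {t} ⊆ K ∧ minkAsym K = circum K C / inrad K C ∧
      Nonempty (AsymmetryFrame (Fin 3) K t (minkAsym K)) := by
  obtain ⟨⟨hr, t, ht⟩, -⟩ := hK.isGreatest_inrad hC hsymm
  have hC0 := hC.mem_nhds_zero hsymm
  have hR : 0 < circum K C := hr.trans_le <|
    le_circum_of_smul_add_singleton_subset hK.2.1.isBounded hC.2.1.isBounded hC0 hr.le ht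
  have hmem_smul : ∀ {ρ x}, 0 < ρ → (∀ a ∈ polarBody C, ⟪a, x⟫ ≤ ρ) → x ∈ ρ • C :=
    fun hρ => mem_smul_of_forall_polarBody hC.1 hC.2.1.isClosed (mem_of_mem_nhds hC0) hρ
  have hdiam : ∀ a ∈ polarBody C, ∀ k ∈ K, ∀ k' ∈ K, ⟪a, k - k'⟫ ≤ inrad K C + circum K C :=
    fun a ha k hk k' hk' => hpc ▸ inner_sub_le_diamB hK.2.1.isBounded hC0 hsymm ha hk hk'
  have hcircum : ∀ a ∈ polarBody C, ∀ k ∈ K, ⟪a, k - t⟫ ≤ circum K C := fun a ha k hk =>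
    inner_sub_le_of_sub_mem_smul hC.2.1 ⟨0, mem_of_mem_nhds hC0⟩ hsymm hr.le hR.le ht
      (fun k hk k' hk' => hmem_smul (by positivity) fun a ha => hdiam a ha k hk k' hk') ha hk
  have hsub : K ⊆ circum K C • C + {t} :=
    subset_smul_add_singleton_iff.2 fun k hk => hmem_smul hR fun a ha => hcircum a ha k hk
  obtain ⟨F⟩ := nonempty_asymmetryFrame hr hdiam <|
    zero_mem_convexHull_contactNormals hK.2.1 hC.1 hC.2.1.isClosed hC0 hR hcircum
      fun _ _ => circum_le
  have hs := F.minkAsym_eq (by positivity) (sub_singleton_subset_smul hr hsymm ht hsub)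
  exact ⟨t, ht, hs, hs ▸ ⟨F⟩⟩

theorem AsymmetryFrame.le_two {s : ℝ} (F : AsymmetryFrame (Fin 3) K t s) : s ≤ 2 := by
  have := F.add_one_le_card
  norm_num at this
  linarith

theorem AsymmetryFrame.cFun_pos {s : ℝ} (F : AsymmetryFrame (Fin 3) K t s) : 0 < cFun s := by
  rcases le_or_gt s phiR with hs | hs
  · simp [cFun, hs]
  · exact (isAdmissibleFactor_cFun hs F.le_two).pos (one_lt_phiR.trans hs)

theorem AsymmetryFrame.mem_half_cFun_smul_sub {s : ℝ} (F : AsymmetryFrame (Fin 3) K t s)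
    (hKconv : Convex ℝ K) (hK : IsCompact K) {x : E2} (hadd : t + x ∈ K) (hsub : t - x ∈ K) :
    x ∈ (cFun s / 2) • (K - K) := by
  rcases le_or_gt s phiR with hs | hs
  · rw [cFun, if_pos hs]
    exact ⟨_, sub_mem_sub hadd hsub, by module⟩
  · exact F.mem_half_smul_sub (one_lt_phiR.trans hs) finrank_euclideanSpace_fin
      (isAdmissibleFactor_cFun hs F.le_two) hKconv hK hadd hsub

theorem two_mul_le_mul_widthB (hK : IsBounded K) (hC : IsConvexBody C) (hsymm : C = -C) {r c : ℝ}
    (hr : 0 < r) (hc : 0 < c) (h : ∀ y ∈ C, r • y ∈ (c / 2) • (K - K)) :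
    2 * r ≤ c * widthB K C := by
  have hCC := sub_mem_nhds_zero (hC.mem_nhds_zero hsymm)
  have hsub : (r / c) • (C - C) + {0} ⊆ K - K := by
    rw [smul_add_singleton_subset_iff]
    rintro _ ⟨y, hy, z, hz, rfl⟩
    have hneg : -z ∈ C := neg_mem_of_eq_neg hsymm hz
    have hmid := h _ (hC.1.midpoint_mem hy hneg)
    rw [mem_smul_set_iff_inv_smul_mem₀ (by positivity), midpoint_eq_smul_add] at hmid
    have hcoef : (c / 2)⁻¹ * r * ⅟2 = r / c := by
      rw [invOf_eq_inv]
      field_simp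
    rwa [smul_smul, smul_smul, hcoef, ← sub_eq_add_neg, ← add_zero ((r / c) • _)] at hmid
  have hle : r / c ≤ inrad (K - K) (C - C) :=
    le_csSup (bddAbove_inrad (hK.sub hK) (hC.2.1.isBounded.sub hC.2.1.isBounded) hCC)
      ⟨by positivity, 0, hsub⟩
  rw [div_le_iff₀' hc] at hle
  rw [widthB]
  linarith

theorem IsConvexBody.two_mul_inrad_le_cFun_mul_widthB (hK : IsConvexBody K) (hC : IsConvexBody C)
    (hsymm : C = -C) {s : ℝ} (F : AsymmetryFrame (Fin 3) K t s) (ht : inrad K C • C + {t} ⊆ K) :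
    2 * inrad K C ≤ cFun s * widthB K C := by
  have hr := (hK.isGreatest_inrad hC hsymm).1.1
  have hmem := smul_add_singleton_subset_iff.1 ht
  refine two_mul_le_mul_widthB hK.2.1.isBounded hC hsymm hr F.cFun_pos fun y hy => ?_
  have hneg : -y ∈ C := neg_mem_of_eq_neg hsymm hy
  refine F.mem_half_cFun_smul_sub hK.1 hK.2.1 ?_ ?_
  · rw [add_comm]
    exact hmem y hy
  · rw [sub_eq_neg_add, ← smul_neg]
    exact hmem _ hneg

end DiameterWidthRatio

theorem stmt0 (K C : Set E2) (hK : IsConvexBody K) (hC : IsConvexBody C)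
    (hCsym : C = -C) (hpc : inrad K C + circum K C = diamB K C) :
    diamB K C / widthB K C ≤ ((minkAsym K + 1) / 2) * cFun (minkAsym K) := by
  obtain ⟨t, ht, hs, ⟨F⟩⟩ := hK.exists_asymmetryFrame hC hCsym hpc
  have hr : 0 < inrad K C := (hK.isGreatest_inrad hC hCsym).1.1
  have hwidth := hK.two_mul_inrad_le_cFun_mul_widthB hC hCsym F ht
  have hwpos : 0 < widthB K C := pos_of_mul_pos_right (by linarith) F.cFun_pos.le
  have hdiam : (minkAsym K + 1) * inrad K C = diamB K C := by
    rw [← hpc, hs, add_mul, div_mul_cancel₀ _ hr.ne', one_mul, add_comm]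
  have hs0 := minkAsym_nonneg K
  rw [div_le_iff₀ hwpos, ← hdiam]
  linear_combination (minkAsym K + 1) / 2 * hwidth
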